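/- The number of pairs (A,B) ∈ ℤ² with |A| ≤ X^{1/3}, |B| ≤ X^{1/2}, 4A³ + 27B² ≠ 0, and such that for every prime q, q⁴ | A implies q⁶ ∤ B, equals (4/ζ(10)) X^{5/6} + O(X^{1/2}) as X → ∞ (Brumer's lemma). -/

import Mathlib

open Asymptotics Filter

/-- The number of minimal Weierstrass equations `y² = x³ + Ax + B` of height at most `X`. -/
noncomputable def minimalWeierstrassCount (X : ℝ) : ℕ :=
  Nat.card {AB : ℤ × ℤ // |(AB.1 : ℝ)| ≤ X ^ ((1 : ℝ)/3) ∧ |(AB.2 : ℝ)| ≤ X ^ ((1 : ℝ)/2) ∧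
    4 * AB.1 ^ 3 + 27 * AB.2 ^ 2 ≠ 0 ∧
    ∀ q : ℕ, q.Prime → (q : ℤ) ^ 4 ∣ AB.1 → ¬ (q : ℤ) ^ 6 ∣ AB.2}

/-!
A nonzero pair `(A, B)` has a largest `D` with `D ^ 4 ∣ A` and `D ^ 6 ∣ B`, every other such `d`
divides `D`, and the pair is minimal iff `D = 1`. Since `∑ d ∣ D, μ d` is the indicator of `D = 1`,
the number of minimal pairs with `|A| ≤ x ^ 4`, `|B| ≤ x ^ 6` is the sum over `d` of `μ d` times the
number of nonzero pairs in the box with `d ^ 4 ∣ A` and `d ^ 6 ∣ B`. That number is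
`4 (x / d) ^ 10 + O((x / d) ^ 6)` uniformly in `d`, with no term left over when `x < d` because
`(0, 0)` is excluded, so summation gives `4 x ^ 10 / ζ(10) + O(x ^ 6)`. The pairs on the
discriminant curve are determined by `B`, hence number `O(x ^ 6)`; finally put `X = x ^ 12`.
-/

section BrumerCount

open Finset
open scoped ArithmeticFunction.Moebius

theorem hasSum_ite_dvd_moebius {n : ℕ} (hn : n ≠ 0) :
    HasSum (fun d : ℕ => if d ∣ n then (μ d : ℝ) else 0) (if n = 1 then 1 else 0) := by
  have hsum : ∑ d ∈ n.divisors, (μ d : ℝ) = if n = 1 then 1 else 0 := by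
    rw [← Int.cast_sum, ← ArithmeticFunction.coe_zeta_mul_apply,
      ArithmeticFunction.coe_zeta_mul_moebius, ArithmeticFunction.one_apply]
    norm_cast
  rw [← hsum, ← Nat.filter_dvd_eq_divisors hn, sum_filter]
  refine hasSum_sum_of_ne_finset_zero fun d hd => if_neg fun hdn => hd ?_
  exact mem_range_succ_iff.2 (Nat.le_of_dvd hn.bot_lt hdn)

theorem hasSum_moebius_mul_card_filter_dvd {α : Type*} {s : Finset α} {f : α → ℕ}
    (hf : ∀ a ∈ s, f a ≠ 0) :
    HasSum (fun d : ℕ => (μ d : ℝ) * #{a ∈ s | d ∣ f a}) #{a ∈ s | f a = 1} := by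
  have h := hasSum_sum fun a ha => hasSum_ite_dvd_moebius (hf a ha)
  simpa only [card_filter, Nat.cast_sum, Nat.cast_ite, Nat.cast_one, Nat.cast_zero, mul_sum,
    mul_ite, mul_one, mul_zero] using h

theorem hasSum_moebius_div_pow {s : ℕ} (hs : 1 < s) :
    HasSum (fun n : ℕ => (μ n : ℝ) / n ^ s) (∑' n : ℕ, (1 : ℝ) / (n + 1) ^ s)⁻¹ := by
  have hs' : 1 < (s : ℂ).re := by simpa using hs
  have hzeta : riemannZeta s = ((∑' n : ℕ, (1 : ℝ) / (n + 1) ^ s : ℝ) : ℂ) := by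
    rw [zeta_eq_tsum_one_div_nat_add_one_cpow hs']
    push_cast [Complex.cpow_natCast]
    rfl
  have hinv : LSeries (fun n => (μ n : ℂ)) s = ((∑' n : ℕ, (1 : ℝ) / (n + 1) ^ s)⁻¹ : ℝ) := by
    rw [Complex.ofReal_inv, ← hzeta, ← ArithmeticFunction.LSeries_zeta_eq_riemannZeta hs']
    exact eq_inv_of_mul_eq_one_right (ArithmeticFunction.LSeries_zeta_mul_Lseries_moebius hs')
  have hsum := (ArithmeticFunction.LSeriesSummable_moebius_iff.2 hs').LSeriesHasSum
  rw [hinv] at hsum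
  refine Complex.hasSum_ofReal.1 (hsum.congr_fun fun n => ?_)
  rcases eq_or_ne n 0 with rfl | hn
  · simp
  · simp [LSeries.term_of_ne_zero hn]

/-- The largest `d` such that `d ^ k ∣ p.1` and `d ^ l ∣ p.2`, i.e. the greatest common divisor of
`p` as a vector of weights `(k, l)`. For `k, l ≠ 0` it is `0` exactly at
`p = 0`, where every `d` qualifies. -/
def weightedGcd (k l : ℕ) (p : ℤ × ℤ) : ℕ :=
  (Nat.floorRoot k p.1.natAbs).gcd (Nat.floorRoot l p.2.natAbs)

theorem dvd_weightedGcd {k l d : ℕ} {p : ℤ × ℤ} :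
    d ∣ weightedGcd k l p ↔ (d : ℤ) ^ k ∣ p.1 ∧ (d : ℤ) ^ l ∣ p.2 := by
  simp only [weightedGcd, Nat.dvd_gcd_iff, ← Nat.pow_dvd_iff_dvd_floorRoot, ← Int.natCast_dvd,
    Nat.cast_pow]

theorem weightedGcd_eq_zero {k l : ℕ} (hk : k ≠ 0) (hl : l ≠ 0) {p : ℤ × ℤ} :
    weightedGcd k l p = 0 ↔ p = 0 := by
  simp [weightedGcd, Nat.gcd_eq_zero_iff, hk, hl, Prod.ext_iff]

theorem weightedGcd_eq_one {k l : ℕ} {p : ℤ × ℤ} :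
    weightedGcd k l p = 1 ↔ ∀ q : ℕ, q.Prime → (q : ℤ) ^ k ∣ p.1 → ¬ (q : ℤ) ^ l ∣ p.2 := by
  simp only [Nat.eq_one_iff_not_exists_prime_dvd, dvd_weightedGcd, not_and]

theorem mem_Icc_neg_natCast {n : ℕ} {z : ℤ} : z ∈ Icc (-n : ℤ) n ↔ z.natAbs ≤ n := by
  rw [mem_Icc]
  omega

theorem card_filter_dvd_Icc_neg (n : ℕ) {r : ℕ} (hr : 0 < r) :
    #{a ∈ Icc (-n : ℤ) n | (r : ℤ) ∣ a} = 2 * (n / r) + 1 := by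
  have himage : {a ∈ Icc (-n : ℤ) n | (r : ℤ) ∣ a} =
      (Icc (-(n / r : ℕ) : ℤ) (n / r : ℕ)).image ((r : ℤ) * ·) := by
    ext a
    simp only [mem_filter, mem_image, mem_Icc_neg_natCast, Nat.le_div_iff_mul_le hr]
    constructor
    · rintro ⟨ha, j, rfl⟩
      exact ⟨j, by rwa [Int.natAbs_mul, Int.natAbs_natCast, mul_comm] at ha, rfl⟩
    · rintro ⟨j, hj, rfl⟩
      exact ⟨by rwa [Int.natAbs_mul, Int.natAbs_natCast, mul_comm], dvd_mul_right _ _⟩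
  rw [himage, card_image_of_injective _ (mul_right_injective₀ (by positivity)), Int.card_Icc]
  omega

/-- The integer points of the rectangle `[-m, m] × [-n, n]`. -/
noncomputable def intBox (m n : ℕ) : Finset (ℤ × ℤ) :=
  Icc (-m : ℤ) m ×ˢ Icc (-n : ℤ) n

theorem zero_mem_intBox (m n : ℕ) : (0 : ℤ × ℤ) ∈ intBox m n := by
  simp [intBox]

theorem card_filter_dvd_weightedGcd_intBox (m n k l : ℕ) {d : ℕ} (hd : 0 < d) :
    #{p ∈ (intBox m n).erase 0 | d ∣ weightedGcd k l p} + 1 =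
      (2 * (m / d ^ k) + 1) * (2 * (n / d ^ l) + 1) := by
  have hzero : (0 : ℤ × ℤ) ∈ {p ∈ intBox m n | d ∣ weightedGcd k l p} :=
    mem_filter.2 ⟨zero_mem_intBox m n, dvd_weightedGcd.2 ⟨dvd_zero _, dvd_zero _⟩⟩
  rw [filter_erase, card_erase_add_one hzero]
  simp only [intBox, dvd_weightedGcd, ← Nat.cast_pow]
  rw [filter_product, card_product, card_filter_dvd_Icc_neg m (pow_pos hd k),
    card_filter_dvd_Icc_neg n (pow_pos hd l)]

section OrderedRing

variable {R : Type*} [CommRing R] [LinearOrder R] [IsStrictOrderedRing R] [FloorSemiring R]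

theorem mem_Icc_neg_floor {a : R} (ha : 0 ≤ a) {z : ℤ} :
    z ∈ Icc (-⌊a⌋₊ : ℤ) ⌊a⌋₊ ↔ |(z : R)| ≤ a := by
  rw [mem_Icc_neg_natCast, Nat.le_floor_iff ha, Nat.cast_natAbs, Int.cast_abs]

theorem mem_intBox_floor {a b : R} (ha : 0 ≤ a) (hb : 0 ≤ b) {p : ℤ × ℤ} :
    p ∈ intBox ⌊a⌋₊ ⌊b⌋₊ ↔ |(p.1 : R)| ≤ a ∧ |(p.2 : R)| ≤ b := by
  rw [intBox, mem_product, mem_Icc_neg_floor ha, mem_Icc_neg_floor hb]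

theorem abs_two_mul_floor_add_one_sub_le {u : R} (hu : 0 ≤ u) :
    |(2 * ⌊u⌋₊ + 1 : R) - 2 * u| ≤ 1 := by
  rw [abs_le]
  constructor <;> linarith [Nat.floor_le hu, Nat.lt_floor_add_one u]

theorem abs_two_mul_floor_pow_add_one_mul_sub_le {k l : ℕ} (hk : k ≠ 0) (hkl : k ≤ l) {t : R}
    (ht : 0 ≤ t) :
    |(2 * ⌊t ^ k⌋₊ + 1 : R) * (2 * ⌊t ^ l⌋₊ + 1) - 1 - 4 * t ^ (k + l)| ≤ 6 * t ^ l := by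
  have hk0 : 0 ≤ t ^ k := pow_nonneg ht k
  have hl0 : 0 ≤ t ^ l := pow_nonneg ht l
  rw [pow_add]
  rcases lt_or_ge t 1 with h1 | h1
  · have hk1 : t ^ k < 1 := pow_lt_one₀ ht h1 hk
    have hl1 : t ^ l < 1 := pow_lt_one₀ ht h1 (by omega)
    have hmul0 : 0 ≤ t ^ k * t ^ l := mul_nonneg hk0 hl0
    have hmul : t ^ k * t ^ l ≤ t ^ l := mul_le_of_le_one_left hl0 hk1.le
    rw [Nat.floor_eq_zero.2 hk1, Nat.floor_eq_zero.2 hl1, abs_le]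
    constructor <;> push_cast <;> linarith
  · have hkl' : t ^ k ≤ t ^ l := pow_le_pow_right₀ h1 hkl
    have hl1 : 1 ≤ t ^ l := one_le_pow₀ h1
    have hu := abs_two_mul_floor_add_one_sub_le hk0
    have hv := abs_two_mul_floor_add_one_sub_le hl0
    generalize (2 * ⌊t ^ k⌋₊ + 1 : R) = U at hu ⊢
    generalize (2 * ⌊t ^ l⌋₊ + 1 : R) = V at hv ⊢
    generalize t ^ k = u at *
    generalize t ^ l = v at *
    calc |U * V - 1 - 4 * (u * v)|
        = |(U - 2 * u) * (V - 2 * v) + 2 * u * (V - 2 * v) + 2 * v * (U - 2 * u) - 1| := by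
          congr 1; ring
      _ ≤ |U - 2 * u| * |V - 2 * v| + 2 * u * |V - 2 * v| + 2 * v * |U - 2 * u| + 1 := by
          refine (abs_sub _ _).trans (add_le_add ((abs_add_three _ _ _).trans_eq ?_) abs_one.le)
          simp only [abs_mul, abs_two, abs_of_nonneg hk0, abs_of_nonneg hl0]
      _ ≤ 1 * 1 + 2 * u * 1 + 2 * v * 1 + 1 := by gcongr
      _ ≤ 6 * v := by linarith

end OrderedRing

theorem hasSum_card_weightedGcd_eq_one {k l : ℕ} (hk : k ≠ 0) (hl : l ≠ 0) (a b : ℝ) :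
    HasSum (fun d : ℕ => (μ d : ℝ) *
        ((2 * ⌊a / d ^ k⌋₊ + 1 : ℝ) * (2 * ⌊b / d ^ l⌋₊ + 1) - 1))
      #{p ∈ intBox ⌊a⌋₊ ⌊b⌋₊ | weightedGcd k l p = 1} := by
  have hzero : (0 : ℤ × ℤ) ∉ {p ∈ intBox ⌊a⌋₊ ⌊b⌋₊ | weightedGcd k l p = 1} := by
    simp [(weightedGcd_eq_zero hk hl).2 rfl]
  rw [← erase_eq_of_notMem hzero, ← filter_erase]
  refine (hasSum_moebius_mul_card_filter_dvd fun p hp =>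
    mt (weightedGcd_eq_zero hk hl).1 (ne_of_mem_erase hp)).congr_fun fun d => ?_
  rcases d.eq_zero_or_pos with rfl | hd
  · simp
  · rw [← Nat.cast_pow, ← Nat.cast_pow, Nat.floor_div_natCast, Nat.floor_div_natCast]
    congr 1
    rw [sub_eq_iff_eq_add]
    exact_mod_cast (card_filter_dvd_weightedGcd_intBox ⌊a⌋₊ ⌊b⌋₊ k l hd).symm

theorem abs_card_weightedGcd_eq_one_sub_le {k l : ℕ} (hk : k ≠ 0) (hkl : k ≤ l) (hl : 1 < l)
    {x : ℝ} (hx : 0 ≤ x) :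
    |(#{p ∈ intBox ⌊x ^ k⌋₊ ⌊x ^ l⌋₊ | weightedGcd k l p = 1} : ℝ) -
        4 / (∑' n : ℕ, (1 : ℝ) / (n + 1) ^ (k + l)) * x ^ (k + l)| ≤
      6 * (∑' n : ℕ, (1 : ℝ) / n ^ l) * x ^ l := by
  have hcount := hasSum_card_weightedGcd_eq_one hk (by omega : l ≠ 0) (x ^ k) (x ^ l)
  simp only [← div_pow] at hcount
  have hmain := (hasSum_moebius_div_pow (by omega : 1 < k + l)).mul_left (4 * x ^ (k + l))
  have hbound := (Real.summable_one_div_nat_pow.2 hl).hasSum.mul_left (6 * x ^ l)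
  have hterm (d : ℕ) : ‖(μ d : ℝ) * ((2 * ⌊(x / d) ^ k⌋₊ + 1 : ℝ) * (2 * ⌊(x / d) ^ l⌋₊ + 1) - 1) -
      4 * x ^ (k + l) * ((μ d : ℝ) / d ^ (k + l))‖ ≤ 6 * x ^ l * (1 / (d : ℝ) ^ l) := by
    have hμ : |(μ d : ℝ)| ≤ 1 := by exact_mod_cast ArithmeticFunction.abs_moebius_le_one
    have herr := abs_two_mul_floor_pow_add_one_mul_sub_le hk hkl (div_nonneg hx d.cast_nonneg)
    calc _ = |(μ d : ℝ)| * |(2 * ⌊(x / d) ^ k⌋₊ + 1 : ℝ) * (2 * ⌊(x / d) ^ l⌋₊ + 1) - 1 -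
            4 * (x / d) ^ (k + l)| := by
          rw [Real.norm_eq_abs, ← abs_mul, div_pow _ _ (k + l)]; ring_nf
      _ ≤ 1 * (6 * (x / d) ^ l) := by gcongr
      _ = 6 * x ^ l * (1 / (d : ℝ) ^ l) := by rw [div_pow]; ring
  have h := (hcount.sub hmain).norm_le_of_bounded hbound hterm
  rw [Real.norm_eq_abs] at h
  convert h using 1
  · congr 2; ring
  · ring

theorem injOn_snd_discriminant_eq_zero :
    Set.InjOn Prod.snd {p : ℤ × ℤ | 4 * p.1 ^ 3 + 27 * p.2 ^ 2 = 0} := by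
  rintro ⟨A, B⟩ hp ⟨A', _⟩ hp' rfl
  simp only [Set.mem_ofPred_eq] at hp hp'
  have hcube : A ^ 3 = A' ^ 3 := by linarith
  rw [(Odd.strictMono_pow (by decide : Odd 3)).injective hcube]

theorem card_filter_discriminant_eq_zero_intBox_le (m n : ℕ) :
    #{p ∈ intBox m n | 4 * p.1 ^ 3 + 27 * p.2 ^ 2 = 0} ≤ 2 * n + 1 := by
  calc _ ≤ #(Icc (-n : ℤ) n) :=
        card_le_card_of_injOn Prod.snd (fun p hp => (mem_product.1 (mem_filter.1 hp).1).2)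
          (injOn_snd_discriminant_eq_zero.mono fun p hp => (mem_filter.1 hp).2)
    _ = 2 * n + 1 := by rw [Int.card_Icc]; omega

theorem pow_rpow_eq_pow {x : ℝ} (hx : 0 ≤ x) {n m : ℕ} {r : ℝ} (h : n * r = m) :
    (x ^ n) ^ r = x ^ m := by
  rw [← Real.rpow_natCast_mul hx, h, Real.rpow_natCast]

theorem minimalWeierstrassCount_pow_twelve {x : ℝ} (hx : 0 ≤ x) :
    minimalWeierstrassCount (x ^ 12) =
      #{p ∈ {p ∈ intBox ⌊x ^ 4⌋₊ ⌊x ^ 6⌋₊ | weightedGcd 4 6 p = 1} |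
        ¬ 4 * p.1 ^ 3 + 27 * p.2 ^ 2 = 0} := by
  refine Nat.subtype_card _ fun p => ?_
  rw [mem_filter, mem_filter, mem_intBox_floor (pow_nonneg hx 4) (pow_nonneg hx 6),
    weightedGcd_eq_one,
    pow_rpow_eq_pow hx (m := 4) (by norm_num), pow_rpow_eq_pow hx (m := 6) (by norm_num)]
  tauto

theorem abs_minimalWeierstrassCount_pow_twelve_sub_le {x : ℝ} (hx : 0 ≤ x) :
    |(minimalWeierstrassCount (x ^ 12) : ℝ) -
        #{p ∈ intBox ⌊x ^ 4⌋₊ ⌊x ^ 6⌋₊ | weightedGcd 4 6 p = 1}| ≤ 2 * x ^ 6 + 1 := by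
  set s := {p ∈ intBox ⌊x ^ 4⌋₊ ⌊x ^ 6⌋₊ | weightedGcd 4 6 p = 1}
  have hsplit : (#{p ∈ s | 4 * p.1 ^ 3 + 27 * p.2 ^ 2 = 0} : ℝ) +
      minimalWeierstrassCount (x ^ 12) = #s := by
    rw [minimalWeierstrassCount_pow_twelve hx]
    exact_mod_cast card_filter_add_card_filter_not _
  have hsingular : #{p ∈ s | 4 * p.1 ^ 3 + 27 * p.2 ^ 2 = 0} ≤ 2 * ⌊x ^ 6⌋₊ + 1 :=
    (card_le_card (filter_subset_filter _ (filter_subset _ _))).trans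
      (card_filter_discriminant_eq_zero_intBox_le _ _)
  calc _ = (#{p ∈ s | 4 * p.1 ^ 3 + 27 * p.2 ^ 2 = 0} : ℝ) := by
        rw [abs_sub_comm, ← hsplit, add_sub_cancel_right, Nat.abs_cast]
    _ ≤ 2 * ⌊x ^ 6⌋₊ + 1 := by exact_mod_cast hsingular
    _ ≤ 2 * x ^ 6 + 1 := by gcongr; exact Nat.floor_le (pow_nonneg hx 6)

end BrumerCount

/-- **Brumer's lemma.** The number of pairs `(A, B) ∈ ℤ²` with
`|A| ≤ X^{1/3}`, `|B| ≤ X^{1/2}`, `4A³ + 27B² ≠ 0` and, for every prime `q`,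
`q⁴ ∣ A → q⁶ ∤ B`, equals `(4/ζ(10)) X^{5/6} + O(X^{1/2})` as `X → ∞`. -/
theorem brumer_count_minimal_weierstrass :
    (fun X : ℝ => (minimalWeierstrassCount X : ℝ) -
        (4 / (∑' n : ℕ, (1 : ℝ) / (n + 1) ^ 10)) * X ^ ((5 : ℝ)/6))
      =O[atTop] fun X : ℝ => X ^ ((1 : ℝ)/2) := by
  refine IsBigO.of_bound (6 * (∑' n : ℕ, (1 : ℝ) / n ^ 6) + 3) ?_
  filter_upwards [eventually_ge_atTop 1] with X hX
  obtain ⟨x, hx, rfl⟩ : ∃ x : ℝ, 1 ≤ x ∧ x ^ 12 = X :=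
    ⟨X ^ ((12 : ℕ) : ℝ)⁻¹, Real.one_le_rpow hX (by positivity),
      Real.rpow_inv_natCast_pow (by linarith) (by norm_num)⟩
  have hx0 : 0 ≤ x := by linarith
  have hmain : (x ^ 12) ^ ((5 : ℝ) / 6) = x ^ 10 := pow_rpow_eq_pow hx0 (by norm_num)
  have herror : (x ^ 12) ^ ((1 : ℝ) / 2) = x ^ 6 := pow_rpow_eq_pow hx0 (by norm_num)
  have hsingular := abs_minimalWeierstrassCount_pow_twelve_sub_le hx0
  have hminimal := abs_card_weightedGcd_eq_one_sub_le (k := 4) (l := 6) (by norm_num)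
    (by norm_num) (by norm_num) hx0
  have hx6 : 1 ≤ x ^ 6 := one_le_pow₀ hx
  rw [hmain, herror, Real.norm_eq_abs, Real.norm_of_nonneg (by positivity)]
  calc _ ≤ 2 * x ^ 6 + 1 + 6 * (∑' n : ℕ, (1 : ℝ) / n ^ 6) * x ^ 6 :=
        (abs_sub_le _ _ _).trans (add_le_add hsingular hminimal)
    _ ≤ (6 * (∑' n : ℕ, (1 : ℝ) / n ^ 6) + 3) * x ^ 6 := by linarith
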